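/- arXiv:2603.08979 — 3 statements merged into one kernel-verified Lean document; each statement's English description precedes it below -/
import Mathlib

section
/- Adopt the MDP data with Lipschitz assumptions. Let v : X → ℝ be bounded and L_v-Lipschitz, and for t ∈ ℕ define δ_t = L_c ∑_{k=1}^t (α L_F)^{k−1} + L_v (α L_F)^t. Then for every t ≥ 1: (a) |(Φ_t v)(x₁) − (Φ_t v)(x₂)| ≤ δ_t · ρ_X(x₁, x₂) for all x₁, x₂ ∈ X; and (b) |(Φ_t v)(F(x,a,z₁)) − (Φ_t v)(F(x,a,z₂))| ≤ δ_t · L_F · ρ_W(z₁, z₂) for all x ∈ X, a ∈ A, z₁, z₂ ∈ W. (Lemma C.4.) -/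
/-!
One application of `Φ` keeps a function bounded and turns an `L`-Lipschitz function into an
`(L_c + α L L_F)`-Lipschitz one: the integrands at `x₁` and `x₂` differ pointwise by at most
`(L_c + α L L_F) ρ(x₁, x₂)`, integration against a probability measure preserves this bound,
and so does the infimum over actions (`bellmanPhi_le_add`). Boundedness and continuity serve to make
the integrals and the infimum genuine rather than junk values. Since
`δ_{t+1} = L_c + α L_F δ_t` and `δ_0 = L_v`, induction gives (a); (b) is (a) composed with the
Lipschitz bound of `z ↦ F(x,a,z)`.
-/

open MeasureTheory Filter Topology
open scoped ENNReal NNReal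

noncomputable section

/-- The Bellman operator `(Φ v)(x) = inf_{a ∈ A} ∫ (c(x,a,z) + α v(F(x,a,z))) μ(dz)`
when every action is admissible in every state. -/
def bellmanPhi {X 𝔸 W : Type*} [MeasurableSpace W]
    (F : X → 𝔸 → W → X) (c : X → 𝔸 → W → ℝ) (α : ℝ) (μ : Measure W)
    (v : X → ℝ) (x : X) : ℝ :=
  ⨅ a : 𝔸, ∫ z, (c x a z + α * v (F x a z)) ∂μ

section Helpers

variable {X 𝔸 W : Type*} [MetricSpace X] [TopologicalSpace 𝔸] [TopologicalSpace W]
  [MeasurableSpace W] [BorelSpace W] {μ : Measure W} [IsProbabilityMeasure μ]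
  {c : X → 𝔸 → W → ℝ} {F : X → 𝔸 → W → X} {α Mc M : ℝ} {v : X → ℝ}

lemma continuous_of_abs_sub_le {L : ℝ} (h : ∀ x₁ x₂, |v x₁ - v x₂| ≤ L * dist x₁ x₂) :
    Continuous v :=
  (LipschitzWith.of_dist_le' h).continuous

lemma abs_integrand_le (hcbd : ∀ x a z, c x a z ≤ Mc) (hcnn : ∀ x a z, 0 ≤ c x a z)
    (hα0 : 0 < α) (hv : ∀ x, |v x| ≤ M) (x : X) (a : 𝔸) (z : W) :
    |c x a z + α * v (F x a z)| ≤ Mc + α * M := by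
  refine (abs_add_le _ _).trans (add_le_add ?_ ?_)
  · rw [abs_of_nonneg (hcnn x a z)]
    exact hcbd x a z
  · rw [abs_mul, abs_of_pos hα0]
    exact mul_le_mul_of_nonneg_left (hv _) hα0.le

lemma integrable_integrand
    (hccont : Continuous (fun p : X × 𝔸 × W => c p.1 p.2.1 p.2.2))
    (hcbd : ∀ x a z, c x a z ≤ Mc) (hcnn : ∀ x a z, 0 ≤ c x a z)
    (hFcont : Continuous (fun p : X × 𝔸 × W => F p.1 p.2.1 p.2.2))
    (hα0 : 0 < α) (hvc : Continuous v) (hv : ∀ x, |v x| ≤ M) (x : X) (a : 𝔸) :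
    Integrable (fun z => c x a z + α * v (F x a z)) μ := by
  have hp : Continuous (fun z : W => (x, a, z)) := by fun_prop
  have hcont : Continuous (fun z => c x a z + α * v (F x a z)) :=
    (hccont.comp hp).add (continuous_const.mul (hvc.comp (hFcont.comp hp)))
  exact Integrable.of_bound hcont.measurable.aestronglyMeasurable (Mc + α * M)
    (Eventually.of_forall fun z => abs_integrand_le hcbd hcnn hα0 hv x a z)

lemma abs_integral_integrand_le (hcbd : ∀ x a z, c x a z ≤ Mc) (hcnn : ∀ x a z, 0 ≤ c x a z)
    (hα0 : 0 < α) (hv : ∀ x, |v x| ≤ M) (x : X) (a : 𝔸) :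
    |∫ z, (c x a z + α * v (F x a z)) ∂μ| ≤ Mc + α * M := by
  have hb : ∀ᵐ z ∂μ, ‖c x a z + α * v (F x a z)‖ ≤ Mc + α * M :=
    Eventually.of_forall fun z => abs_integrand_le hcbd hcnn hα0 hv x a z
  simpa using norm_integral_le_of_norm_le_const hb

lemma bddBelow_range_integral (hcbd : ∀ x a z, c x a z ≤ Mc) (hcnn : ∀ x a z, 0 ≤ c x a z)
    (hα0 : 0 < α) (hv : ∀ x, |v x| ≤ M) (x : X) :
    BddBelow (Set.range fun a : 𝔸 => ∫ z, (c x a z + α * v (F x a z)) ∂μ) := by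
  refine ⟨-(Mc + α * M), ?_⟩
  rintro _ ⟨a, rfl⟩
  exact (abs_le.1 (abs_integral_integrand_le hcbd hcnn hα0 hv x a)).1

lemma abs_bellmanPhi_le [Nonempty 𝔸] (hcbd : ∀ x a z, c x a z ≤ Mc)
    (hcnn : ∀ x a z, 0 ≤ c x a z) (hα0 : 0 < α) (hv : ∀ x, |v x| ≤ M) (x : X) :
    |bellmanPhi F c α μ v x| ≤ Mc + α * M := by
  have h := fun a => abs_le.1 (abs_integral_integrand_le (F := F) (μ := μ) hcbd hcnn hα0 hv x a)
  obtain ⟨a₀⟩ := ‹Nonempty 𝔸›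
  have : Nonempty 𝔸 := ⟨a₀⟩
  exact abs_le.2 ⟨le_ciInf fun a => (h a).1,
    (ciInf_le (bddBelow_range_integral hcbd hcnn hα0 hv x) a₀).trans (h a₀).2⟩

/-- One-sided Lipschitz estimate for `Φ v`; exchanging `x₁` and `x₂` gives the two-sided one. -/
lemma bellmanPhi_le_add [Nonempty 𝔸]
    (hccont : Continuous (fun p : X × 𝔸 × W => c p.1 p.2.1 p.2.2))
    (hcbd : ∀ x a z, c x a z ≤ Mc) (hcnn : ∀ x a z, 0 ≤ c x a z)
    (hFcont : Continuous (fun p : X × 𝔸 × W => F p.1 p.2.1 p.2.2))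
    (hα0 : 0 < α) {Lc LF L : ℝ} (hL : 0 ≤ L)
    (hcLipX : ∀ a z x₁ x₂, |c x₁ a z - c x₂ a z| ≤ Lc * dist x₁ x₂)
    (hFLipX : ∀ a z x₁ x₂, dist (F x₁ a z) (F x₂ a z) ≤ LF * dist x₁ x₂)
    (hv : ∀ x, |v x| ≤ M) (hvLip : ∀ x₁ x₂, |v x₁ - v x₂| ≤ L * dist x₁ x₂) (x₁ x₂ : X) :
    bellmanPhi F c α μ v x₁ ≤
      bellmanPhi F c α μ v x₂ + (Lc + α * LF * L) * dist x₁ x₂ := by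
  have hvc := continuous_of_abs_sub_le hvLip
  have hint := integrable_integrand (μ := μ) hccont hcbd hcnn hFcont hα0 hvc hv
  rw [← sub_le_iff_le_add]
  refine le_ciInf fun a => ?_
  rw [sub_le_iff_le_add]
  refine (ciInf_le (bddBelow_range_integral hcbd hcnn hα0 hv x₁) a).trans ?_
  calc ∫ z, (c x₁ a z + α * v (F x₁ a z)) ∂μ
      ≤ ∫ z, ((c x₂ a z + α * v (F x₂ a z)) + (Lc + α * LF * L) * dist x₁ x₂) ∂μ := by
        refine integral_mono (hint x₁ a) ((hint x₂ a).add (integrable_const _)) fun z => ?_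
        have h1 := (abs_le.1 (hcLipX a z x₁ x₂)).2
        have h2 : v (F x₁ a z) - v (F x₂ a z) ≤ L * (LF * dist x₁ x₂) :=
          (abs_le.1 (hvLip _ _)).2.trans (mul_le_mul_of_nonneg_left (hFLipX a z x₁ x₂) hL)
        have h3 := mul_le_mul_of_nonneg_left h2 hα0.le
        dsimp only
        linarith
    _ = _ := by
        rw [integral_add (hint x₂ a) (integrable_const _)]
        simp

end Helpers

/-- Lemma C.4: Lipschitz estimates for the Bellman iterates, with
`δ_t = L_c ∑_{k=1}^t (αL_F)^{k−1} + L_v (αL_F)^t`. -/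
theorem stmt_5 {X 𝔸 W : Type*}
    [MetricSpace X] [TopologicalSpace.SeparableSpace X] [MeasurableSpace X] [BorelSpace X]
    [MetricSpace 𝔸] [TopologicalSpace.SeparableSpace 𝔸] [MeasurableSpace 𝔸] [BorelSpace 𝔸]
    [CompactSpace 𝔸] [Nonempty 𝔸]
    [MetricSpace W] [TopologicalSpace.SeparableSpace W] [MeasurableSpace W] [BorelSpace W]
    (μ : Measure W) [IsProbabilityMeasure μ]
    (c : X → 𝔸 → W → ℝ)
    (hccont : Continuous (fun p : X × 𝔸 × W => c p.1 p.2.1 p.2.2))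
    (Mc : ℝ) (hcbd : ∀ x a z, c x a z ≤ Mc) (hcnn : ∀ x a z, 0 ≤ c x a z)
    (F : X → 𝔸 → W → X)
    (hFcont : Continuous (fun p : X × 𝔸 × W => F p.1 p.2.1 p.2.2))
    (α : ℝ) (hα0 : 0 < α) (hα1 : α < 1)
    (Lc LF : ℝ) (hLc : 0 ≤ Lc) (hLF : 0 ≤ LF) (hαLF : α * LF < 1)
    (hcLipX : ∀ a z x₁ x₂, |c x₁ a z - c x₂ a z| ≤ Lc * dist x₁ x₂)
    (hcLipW : ∀ x a z₁ z₂, |c x a z₁ - c x a z₂| ≤ Lc * dist z₁ z₂)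
    (hFLipX : ∀ a z x₁ x₂, dist (F x₁ a z) (F x₂ a z) ≤ LF * dist x₁ x₂)
    (hFLipW : ∀ x a z₁ z₂, dist (F x a z₁) (F x a z₂) ≤ LF * dist z₁ z₂)
    (v : X → ℝ) (Lv : ℝ) (hLv : 0 ≤ Lv)
    (hvbd : ∃ M, ∀ x, |v x| ≤ M)
    (hvLip : ∀ x₁ x₂, |v x₁ - v x₂| ≤ Lv * dist x₁ x₂)
    (t : ℕ) (ht : 1 ≤ t) :
    (∀ x₁ x₂ : X, |(bellmanPhi F c α μ)^[t] v x₁ - (bellmanPhi F c α μ)^[t] v x₂| ≤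
      (Lc * ∑ k ∈ Finset.range t, (α * LF) ^ k + Lv * (α * LF) ^ t) * dist x₁ x₂) ∧
    (∀ (x : X) (a : 𝔸) (z₁ z₂ : W),
      |(bellmanPhi F c α μ)^[t] v (F x a z₁) - (bellmanPhi F c α μ)^[t] v (F x a z₂)| ≤
      (Lc * ∑ k ∈ Finset.range t, (α * LF) ^ k + Lv * (α * LF) ^ t) * LF * dist z₁ z₂) := by
  obtain ⟨M, hM⟩ := hvbd
  have hr : 0 ≤ α * LF := mul_nonneg hα0.le hLF
  have hδ : ∀ t : ℕ, 0 ≤ Lc * ∑ k ∈ Finset.range t, (α * LF) ^ k + Lv * (α * LF) ^ t :=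
    fun t => by positivity
  -- Boundedness is carried along the induction, since the next step needs integrability.
  have key : ∀ t : ℕ, (∃ M, ∀ x, |(bellmanPhi F c α μ)^[t] v x| ≤ M) ∧
      ∀ x₁ x₂ : X, |(bellmanPhi F c α μ)^[t] v x₁ - (bellmanPhi F c α μ)^[t] v x₂| ≤
        (Lc * ∑ k ∈ Finset.range t, (α * LF) ^ k + Lv * (α * LF) ^ t) * dist x₁ x₂ := by
    intro t
    induction t with
    | zero => exact ⟨⟨M, hM⟩, by simpa using hvLip⟩
    | succ t ih =>
      obtain ⟨⟨M', hM'⟩, hLip⟩ := ih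
      rw [Function.iterate_succ_apply']
      refine ⟨⟨Mc + α * M', abs_bellmanPhi_le hcbd hcnn hα0 hM'⟩, fun x₁ x₂ => ?_⟩
      have hle := bellmanPhi_le_add (μ := μ) hccont hcbd hcnn hFcont hα0 (hδ t)
        hcLipX hFLipX hM' hLip
      -- The recursion `δ_{t+1} = L_c + α L_F δ_t`.
      have hrec : Lc * ∑ k ∈ Finset.range (t + 1), (α * LF) ^ k + Lv * (α * LF) ^ (t + 1) =
          Lc + α * LF * (Lc * ∑ k ∈ Finset.range t, (α * LF) ^ k + Lv * (α * LF) ^ t) := by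
        rw [geom_sum_succ]
        ring
      rw [hrec, abs_sub_le_iff]
      have h12 := hle x₁ x₂
      have h21 := hle x₂ x₁
      rw [dist_comm x₂ x₁] at h21
      constructor <;> linarith
  refine ⟨(key t).2, fun x a z₁ z₂ => ((key t).2 _ _).trans ?_⟩
  rw [mul_assoc _ LF]
  exact mul_le_mul_of_nonneg_left (hFLipW x a z₁ z₂) (hδ t)
end
end

section
/- Adopt the MDP data with Lipschitz assumptions, the robust Bellman operator, the Q-operators, the comparison function ψ, and Diff₂. Let μ̂ be a Borel probability measure on W (a fixed realization of the empirical distribution), ε ∈ [0,∞), and P = { ν : d(ν, μ̂) ≤ ε } the associated ambiguity set (nonempty since d(μ̂, μ̂) = 0). Then for every bounded L_v-Lipschitz v : X → ℝ, every t ≥ 1, every (x,a) ∈ X × A, and every x ∈ X: |Q_{t,v}(x,a) − Q̃^P_{t,v}(x,a)| ≤ (ψ(d(μ, μ̂)) + ψ(ε)) · Diff₂(t,v), and |(Φ_t v)(x) − (Φ̃^P_t v)(x)| ≤ (ψ(d(μ, μ̂)) + ψ(ε)) · Diff₂(t,v). (Lemma C.5.) -/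
/-!
The Bellman operator is the robust Bellman operator of the singleton ambiguity set `{μ}`, and likewise
for the Q-operators, so both are treated at once. For a set of probability measures, one application of
the operator turns a bound `M` and a Lipschitz constant `L` of a function into the bound `Mc + α M` and
the Lipschitz constant `Lc + α LF L` (`BoundedLip.robustPhi`); this makes all integrands bounded and
Lipschitz in `z`, hence integrable, and it controls their bounded Lipschitz norm.

For `ν ∈ P` the triangle inequality for `β` through `μ̂` gives `β(μ,ν) ≤ K := ψ(d(μ,μ̂)) + ψ(ε)`. The
error in step `t` is split as follows: replacing `μ` by `ν` under the integral of
`c + α (Φ_{t-1} v) ∘ F` costs at most `K` times the bounded Lipschitz norm of this function, and then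
replacing `Φ_{t-1} v` by `Φ̃_{t-1} v` costs at most `α` times the previous error. The resulting recursion
(`errB`) is solved exactly by `Diff2` (`errB_eq_Diff2`).

If `d(μ,μ̂) = ∞`, the bound is infinite unless `Diff2` vanishes. The same recursion with the trivial
constant `K = 2` shows that the error is always at most `2 * Diff2`, so it is zero in that case.
-/

open MeasureTheory Filter Topology
open scoped ENNReal NNReal Classical

noncomputable section

/-- The condition `‖f‖_L + ‖f‖_∞ ≤ 1` on a function `f : W → ℝ`. -/
def BLle1 {W : Type*} [PseudoMetricSpace W] (f : W → ℝ) : Prop :=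
  ∃ L C : ℝ, 0 ≤ L ∧ 0 ≤ C ∧ L + C ≤ 1 ∧
    (∀ x y, |f x - f y| ≤ L * dist x y) ∧ ∀ x, |f x| ≤ C

/-- The bounded Lipschitz metric. -/
def betaDist {W : Type*} [PseudoMetricSpace W] [MeasurableSpace W]
    (μ ν : Measure W) : ℝ :=
  sSup {r : ℝ | ∃ f : W → ℝ, Measurable f ∧ BLle1 f ∧
    r = |∫ z, f z ∂μ - ∫ z, f z ∂ν|}

/-- The extension of `ψ : [0,∞) → [0,∞)` to `[0,∞]` by `ψ(∞) = ∞`. -/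
def psiE (ψ : ℝ → ℝ) (x : ℝ≥0∞) : ℝ≥0∞ :=
  if x = ⊤ then ⊤ else ENNReal.ofReal (ψ x.toReal)

/-- The quantity `Diff₂(t,v)` of Lemma C.5, where `Mc` bounds `‖c‖_∞`, `Mv` bounds `‖v‖_∞`
and `Lv` is a Lipschitz constant of `v`. -/
def Diff2 (α Lc LF Mc Mv Lv : ℝ) (t : ℕ) : ℝ :=
  (Mc + Lc) * ∑ k ∈ Finset.range t, α ^ k
    + α ^ t * (Mv + Lv * LF)
    + Mc * ∑ j ∈ Finset.Icc 1 (t - 1), α ^ j * ∑ k ∈ Finset.range (t - j), α ^ k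
    + ((t : ℝ) - 1) * α ^ t * Mv
    + α * Lc * LF * ∑ j ∈ Finset.Icc 1 t, α ^ (j - 1) * ∑ k ∈ Finset.range (t - j), (α * LF) ^ k
    + α * Lv * LF * ∑ j ∈ Finset.Icc 1 (t - 1), (α * LF) ^ j * α ^ (t - j - 1)

/-- The robust Bellman operator
`(Φ̃^P v)(x) = inf_{a ∈ A} sup_{ν ∈ P} ∫ (c(x,a,z) + α v(F(x,a,z))) ν(dz)`. -/
def robustPhi {X 𝔸 W : Type*} [MeasurableSpace W]
    (F : X → 𝔸 → W → X) (c : X → 𝔸 → W → ℝ) (α : ℝ) (P : Set (Measure W))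
    (v : X → ℝ) (x : X) : ℝ :=
  ⨅ a : 𝔸, sSup {r : ℝ | ∃ ν ∈ P, r = ∫ z, (c x a z + α * v (F x a z)) ∂ν}

/-- The Q-operator `Q_{t,v}(x,a) = ∫ (c(x,a,z) + α (Φ_{t−1} v)(F(x,a,z))) μ(dz)`. -/
def Qop {X 𝔸 W : Type*} [MeasurableSpace W]
    (F : X → 𝔸 → W → X) (c : X → 𝔸 → W → ℝ) (α : ℝ) (μ : Measure W)
    (t : ℕ) (v : X → ℝ) (x : X) (a : 𝔸) : ℝ :=
  ∫ z, (c x a z + α * ((bellmanPhi F c α μ)^[t - 1] v) (F x a z)) ∂μ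

/-- The robust Q-operator
`Q̃^P_{t,v}(x,a) = sup_{ν ∈ P} ∫ (c(x,a,z) + α (Φ̃^P_{t−1} v)(F(x,a,z))) ν(dz)`. -/
def robustQop {X 𝔸 W : Type*} [MeasurableSpace W]
    (F : X → 𝔸 → W → X) (c : X → 𝔸 → W → ℝ) (α : ℝ) (P : Set (Measure W))
    (t : ℕ) (v : X → ℝ) (x : X) (a : 𝔸) : ℝ :=
  sSup {r : ℝ | ∃ ν ∈ P, r = ∫ z, (c x a z + α * ((robustPhi F c α P)^[t - 1] v) (F x a z)) ∂ν}

/-- `f` is bounded by `M` and `L`-Lipschitz, with `M, L ≥ 0`. -/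
structure BoundedLip {Y : Type*} [PseudoMetricSpace Y] (f : Y → ℝ) (M L : ℝ) : Prop where
  M_nonneg : 0 ≤ M
  L_nonneg : 0 ≤ L
  bound : ∀ y, |f y| ≤ M
  lip : ∀ y₁ y₂, |f y₁ - f y₂| ≤ L * dist y₁ y₂

/-- The worst-case expectation `sup_{ν ∈ P} ∫ g dν`. -/
def supInt {W : Type*} [MeasurableSpace W] (P : Set (Measure W)) (g : W → ℝ) : ℝ :=
  sSup {r : ℝ | ∃ ν ∈ P, r = ∫ z, g z ∂ν}

/-- The uniform bound on the `s`-th (robust) Bellman iterate. -/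
def supB (α Mc Mv : ℝ) : ℕ → ℝ
  | 0 => Mv
  | s + 1 => Mc + α * supB α Mc Mv s

/-- The Lipschitz constant of the `s`-th (robust) Bellman iterate. -/
def lipB (α Lc LF Lv : ℝ) : ℕ → ℝ
  | 0 => Lv
  | s + 1 => Lc + α * LF * lipB α Lc LF Lv s

/-- The accumulated error factor: each step adds the bounded Lipschitz norm of the current integrand
to the discounted previous error. -/
def errB (α Lc LF Mc Mv Lv : ℝ) : ℕ → ℝ
  | 0 => 0
  | s + 1 => supB α Mc Mv (s + 1) + lipB α Lc LF Lv (s + 1) + α * errB α Lc LF Mc Mv Lv s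

/-! ### Solving the error recursion -/

lemma supB_eq (α Mc Mv : ℝ) (s : ℕ) :
    supB α Mc Mv s = Mc * ∑ k ∈ Finset.range s, α ^ k + α ^ s * Mv := by
  induction s with
  | zero => simp [supB]
  | succ n ih => rw [supB, ih, Finset.sum_range_succ', pow_succ]
                 simp only [pow_succ, ← Finset.sum_mul]; ring

lemma lipB_eq (α Lc LF Lv : ℝ) (s : ℕ) :
    lipB α Lc LF Lv s = Lc * ∑ k ∈ Finset.range s, (α * LF) ^ k + (α * LF) ^ s * Lv := by
  induction s with
  | zero => simp [lipB]
  | succ n ih => rw [lipB, ih, Finset.sum_range_succ']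
                 simp only [pow_succ, ← Finset.sum_mul]; ring

lemma sum_Icc_one (f : ℕ → ℝ) (n : ℕ) :
    ∑ j ∈ Finset.Icc 1 n, f j = ∑ j ∈ Finset.range n, f (j + 1) := by
  induction n with
  | zero => simp
  | succ n ih => rw [Finset.sum_Icc_succ_top (by omega), ih, Finset.sum_range_succ]

lemma discounted_sum_succ (α : ℝ) (G : ℕ → ℝ) (n : ℕ) :
    ∑ j ∈ Finset.range (n + 1), α ^ j * G (n + 1 - j)
      = α * ∑ j ∈ Finset.range n, α ^ j * G (n - j) + G (n + 1) := by
  rw [Finset.sum_range_succ', Finset.mul_sum]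
  simp only [Nat.add_sub_add_right, pow_zero, one_mul, Nat.sub_zero]
  congr 1
  exact Finset.sum_congr rfl fun j _ => by ring

lemma geom_convolution_succ (α q : ℝ) (n : ℕ) :
    ∑ j ∈ Finset.range (n + 1), q ^ (j + 1) * α ^ (n + 1 - j - 1)
      = α * ∑ j ∈ Finset.range n, q ^ (j + 1) * α ^ (n - j - 1) + q ^ (n + 1) := by
  rw [Finset.sum_range_succ, Finset.mul_sum]
  congr 1
  · refine Finset.sum_congr rfl fun j hj => ?_
    have hj := Finset.mem_range.1 hj
    rw [show n + 1 - j - 1 = (n - j - 1) + 1 by omega, pow_succ]; ring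
  · simp

lemma Diff2_succ (α Lc LF Mc Mv Lv : ℝ) (n : ℕ) :
    Diff2 α Lc LF Mc Mv Lv (n + 1) =
      (Mc + Lc) * ∑ k ∈ Finset.range (n + 1), α ^ k
    + α ^ (n + 1) * (Mv + Lv * LF)
    + Mc * (α * ∑ j ∈ Finset.range n, α ^ j * ∑ k ∈ Finset.range (n - j), α ^ k)
    + (n : ℝ) * α ^ (n + 1) * Mv
    + α * Lc * LF * ∑ j ∈ Finset.range (n + 1),
        α ^ j * ∑ k ∈ Finset.range (n + 1 - j - 1), (α * LF) ^ k
    + α * Lv * LF * ∑ j ∈ Finset.range n, (α * LF) ^ (j + 1) * α ^ (n - j - 1) := by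
  rw [Diff2, sum_Icc_one, sum_Icc_one, sum_Icc_one]
  have h1 : ∑ j ∈ Finset.range n, α ^ (j + 1) * ∑ k ∈ Finset.range (n + 1 - (j + 1)), α ^ k
      = α * ∑ j ∈ Finset.range n, α ^ j * ∑ k ∈ Finset.range (n - j), α ^ k := by
    rw [Finset.mul_sum]
    refine Finset.sum_congr rfl fun j _ => ?_
    rw [Nat.add_sub_add_right]; ring
  have h2 : ∀ j, n + 1 - (j + 1) - 1 = n - j - 1 := fun j => by omega
  have h3 : ∀ j, n + 1 - j - 1 = n - j := fun j => by omega
  rw [Nat.add_sub_cancel, h1]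
  simp only [h2, h3, Nat.add_sub_add_right]
  push_cast; ring

lemma errB_eq_Diff2 (α Lc LF Mc Mv Lv : ℝ) (n : ℕ) :
    errB α Lc LF Mc Mv Lv (n + 1) = Diff2 α Lc LF Mc Mv Lv (n + 1) := by
  induction n with
  | zero => simp [errB, supB, lipB, Diff2]; ring
  | succ n ih =>
    rw [errB, ih, Diff2_succ, Diff2_succ, supB_eq, lipB, lipB_eq,
      discounted_sum_succ α (fun m => ∑ k ∈ Finset.range m, α ^ k) n,
      discounted_sum_succ α (fun m => ∑ k ∈ Finset.range (m - 1), (α * LF) ^ k) (n + 1),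
      geom_convolution_succ]
    have hg : ∑ k ∈ Finset.range (n + 1 + 1), α ^ k
        = α * ∑ k ∈ Finset.range (n + 1), α ^ k + 1 := by
      rw [Finset.sum_range_succ', Finset.mul_sum]
      simp [pow_succ, mul_comm]
    have hg' : ∑ k ∈ Finset.range (n + 1), α ^ k
        = ∑ k ∈ Finset.range n, α ^ k + α ^ n := Finset.sum_range_succ _ _
    simp only [Nat.add_sub_cancel]
    rw [hg]
    push_cast
    ring

/-! ### Worst-case expectations of bounded Lipschitz functions -/

lemma abs_csSup_sub_le {ι : Type*} {P : Set ι} (hP : P.Nonempty) {f g : ι → ℝ} {δ C : ℝ}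
    (hf : ∀ i ∈ P, |f i| ≤ C) (hg : ∀ i ∈ P, |g i| ≤ C) (h : ∀ i ∈ P, |f i - g i| ≤ δ) :
    |sSup {r | ∃ i ∈ P, r = f i} - sSup {r | ∃ i ∈ P, r = g i}| ≤ δ := by
  obtain ⟨i₀, hi₀⟩ := hP
  have key : ∀ f g : ι → ℝ, (∀ i ∈ P, |g i| ≤ C) → (∀ i ∈ P, |f i - g i| ≤ δ) →
      sSup {r | ∃ i ∈ P, r = f i} ≤ sSup {r | ∃ i ∈ P, r = g i} + δ := by
    intro f g hg h
    refine csSup_le ⟨_, i₀, hi₀, rfl⟩ ?_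
    rintro _ ⟨i, hi, rfl⟩
    have h1 : g i ≤ sSup {r | ∃ i ∈ P, r = g i} := by
      refine le_csSup ⟨C, ?_⟩ ⟨i, hi, rfl⟩
      rintro _ ⟨j, hj, rfl⟩
      exact (abs_le.1 (hg j hj)).2
    linarith [(abs_le.1 (h i hi)).2]
  rw [abs_le]
  have h1 := key f g hg h
  have h2 := key g f hf fun i hi => by rw [abs_sub_comm]; exact h i hi
  constructor <;> linarith

lemma abs_ciInf_sub_le {ι : Type*} [Nonempty ι] {f g : ι → ℝ} {δ C : ℝ}
    (hf : ∀ i, |f i| ≤ C) (hg : ∀ i, |g i| ≤ C) (h : ∀ i, |f i - g i| ≤ δ) :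
    |(⨅ i, f i) - ⨅ i, g i| ≤ δ := by
  have key : ∀ f g : ι → ℝ, (∀ i, |f i| ≤ C) → (∀ i, |f i - g i| ≤ δ) →
      (⨅ i, f i) - δ ≤ ⨅ i, g i := by
    intro f g hf h
    refine le_ciInf fun i => ?_
    have h1 : ⨅ i, f i ≤ f i := by
      refine ciInf_le ⟨-C, ?_⟩ i
      rintro _ ⟨j, rfl⟩
      exact (abs_le.1 (hf j)).1
    linarith [(abs_le.1 (h i)).2]
  rw [abs_le]
  have h1 := key f g hf h
  have h2 := key g f hg fun i => by rw [abs_sub_comm]; exact h i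
  constructor <;> linarith

lemma BoundedLip.continuous {Y : Type*} [PseudoMetricSpace Y] {f : Y → ℝ} {M L : ℝ}
    (h : BoundedLip f M L) : Continuous f :=
  (LipschitzWith.of_dist_le_mul (K := ⟨L, h.L_nonneg⟩) fun x y => by
    rw [Real.dist_eq]; exact h.lip x y).continuous

section

variable {W : Type*} [MetricSpace W] [MeasurableSpace W] [BorelSpace W]

lemma integrable_of_abs_le {f : W → ℝ} (hf : Measurable f) {C : ℝ} (h : ∀ z, |f z| ≤ C)
    (ν : Measure W) [IsProbabilityMeasure ν] : Integrable f ν :=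
  Integrable.of_bound hf.aestronglyMeasurable C (Eventually.of_forall h)

lemma abs_integral_le {f : W → ℝ} {C : ℝ} (h : ∀ z, |f z| ≤ C)
    (ν : Measure W) [IsProbabilityMeasure ν] : |∫ z, f z ∂ν| ≤ C := by
  have := norm_integral_le_of_norm_le_const (μ := ν) (f := f) (Eventually.of_forall h)
  simpa using this

lemma BoundedLip.integrable {f : W → ℝ} {M L : ℝ} (h : BoundedLip f M L)
    (ν : Measure W) [IsProbabilityMeasure ν] : Integrable f ν :=
  integrable_of_abs_le h.continuous.measurable h.bound ν

lemma abs_integral_sub_le {f g : W → ℝ} {M L M' L' δ : ℝ} (hf : BoundedLip f M L)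
    (hg : BoundedLip g M' L') (h : ∀ z, |f z - g z| ≤ δ)
    (ν : Measure W) [IsProbabilityMeasure ν] : |∫ z, f z ∂ν - ∫ z, g z ∂ν| ≤ δ := by
  rw [← integral_sub (hf.integrable ν) (hg.integrable ν)]
  exact abs_integral_le h ν

/-- The metric `β` controls differences of integrals by the bounded Lipschitz norm. -/
lemma BoundedLip.abs_integral_sub_le_betaDist {f : W → ℝ} {M L : ℝ} (h : BoundedLip f M L)
    (μ ν : Measure W) [IsProbabilityMeasure μ] [IsProbabilityMeasure ν] :
    |∫ z, f z ∂μ - ∫ z, f z ∂ν| ≤ (M + L) * betaDist μ ν := by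
  rcases (add_nonneg h.M_nonneg h.L_nonneg).eq_or_lt with h0 | hpos
  · have hM : M = 0 := by linarith [h.M_nonneg, h.L_nonneg]
    have hf : ∀ z, f z = 0 := fun z => abs_nonpos_iff.1 (hM ▸ h.bound z)
    simp [hf, ← h0]
  · have hmem : |∫ z, f z / (M + L) ∂μ - ∫ z, f z / (M + L) ∂ν| ≤ betaDist μ ν := by
      refine le_csSup ⟨2, ?_⟩ ⟨fun z => f z / (M + L), h.continuous.measurable.div_const _,
        ⟨L / (M + L), M / (M + L), div_nonneg h.L_nonneg hpos.le,
          div_nonneg h.M_nonneg hpos.le, ?_, ?_, ?_⟩, rfl⟩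
      · rintro _ ⟨g, -, ⟨L', C, hL', hC, hLC, -, hg⟩, rfl⟩
        have h1 := abs_integral_le hg μ
        have h2 := abs_integral_le hg ν
        have h3 := abs_sub (∫ z, g z ∂μ) (∫ z, g z ∂ν)
        linarith
      · rw [← add_div, add_comm L M, div_self hpos.ne']
      · intro x y
        rw [← sub_div, abs_div, abs_of_pos hpos, div_mul_eq_mul_div]
        exact div_le_div_of_nonneg_right (h.lip x y) hpos.le
      · intro x
        rw [abs_div, abs_of_pos hpos]
        exact div_le_div_of_nonneg_right (h.bound x) hpos.le
    rw [integral_div, integral_div, ← sub_div, abs_div, abs_of_pos hpos, div_le_iff₀ hpos] at hmem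
    linarith

lemma supInt_singleton (μ : Measure W) (g : W → ℝ) : supInt {μ} g = ∫ z, g z ∂μ := by
  simp [supInt]

variable {P : Set (Measure W)}

lemma BoundedLip.abs_supInt_le {f : W → ℝ} {M L : ℝ} (h : BoundedLip f M L) (hne : P.Nonempty)
    (hP : ∀ ν ∈ P, IsProbabilityMeasure ν) : |supInt P f| ≤ M := by
  have hb : ∀ ν ∈ P, |∫ z, f z ∂ν| ≤ M := fun ν hν =>
    have := hP ν hν
    abs_integral_le h.bound ν
  have hs := abs_csSup_sub_le hne (f := fun ν => ∫ z, f z ∂ν) (g := fun _ => 0) (δ := M) hb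
    (by simpa using fun _ _ => h.M_nonneg) (by simpa using hb)
  have h0 : sSup {r : ℝ | ∃ i ∈ P, r = 0} = 0 := by
    rw [show {r : ℝ | ∃ i ∈ P, r = 0} = {0} by
      ext r; exact ⟨fun ⟨_, _, h⟩ => h, fun h => ⟨_, hne.some_mem, h⟩⟩, csSup_singleton]
  rwa [h0, sub_zero] at hs

lemma abs_supInt_sub_le {f g : W → ℝ} {M L M' L' δ : ℝ} (hf : BoundedLip f M L)
    (hg : BoundedLip g M' L') (h : ∀ z, |f z - g z| ≤ δ) (hne : P.Nonempty)
    (hP : ∀ ν ∈ P, IsProbabilityMeasure ν) : |supInt P f - supInt P g| ≤ δ := by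
  refine abs_csSup_sub_le hne (C := max M M') (fun ν hν => ?_) (fun ν hν => ?_) (fun ν hν => ?_)
  · haveI := hP ν hν
    exact (abs_integral_le hf.bound ν).trans (le_max_left _ _)
  · haveI := hP ν hν
    exact (abs_integral_le hg.bound ν).trans (le_max_right _ _)
  · haveI := hP ν hν
    exact abs_integral_sub_le hf hg h ν

lemma BoundedLip.abs_integral_sub_supInt_le {f : W → ℝ} {M L δ : ℝ} (h : BoundedLip f M L)
    (hne : P.Nonempty) (hP : ∀ ν ∈ P, IsProbabilityMeasure ν)
    (μ : Measure W) [IsProbabilityMeasure μ]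
    (hδ : ∀ ν ∈ P, |∫ z, f z ∂μ - ∫ z, f z ∂ν| ≤ δ) : |∫ z, f z ∂μ - supInt P f| ≤ δ := by
  have hs := abs_csSup_sub_le hne (f := fun _ => ∫ z, f z ∂μ) (g := fun ν => ∫ z, f z ∂ν)
    (C := M) (fun _ _ => abs_integral_le h.bound μ)
    (fun ν hν => haveI := hP ν hν; abs_integral_le h.bound ν) hδ
  have h0 : sSup {r : ℝ | ∃ i ∈ P, r = ∫ z, f z ∂μ} = ∫ z, f z ∂μ := by
    rw [show {r : ℝ | ∃ i ∈ P, r = ∫ z, f z ∂μ} = {∫ z, f z ∂μ} by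
      ext r; exact ⟨fun ⟨_, _, h⟩ => h, fun h => ⟨_, hne.some_mem, h⟩⟩, csSup_singleton]
  rwa [h0] at hs

end

/-! ### The Bellman iterates -/

/-- The Lipschitz and boundedness assumptions on the cost and the system map. -/
structure LipMDP {X 𝔸 W : Type*} [MetricSpace X] [MetricSpace W]
    (F : X → 𝔸 → W → X) (c : X → 𝔸 → W → ℝ) (α Mc Lc LF : ℝ) : Prop where
  α_nonneg : 0 ≤ α
  Mc_nonneg : 0 ≤ Mc
  Lc_nonneg : 0 ≤ Lc
  LF_nonneg : 0 ≤ LF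
  c_bound : ∀ x a z, |c x a z| ≤ Mc
  c_lipX : ∀ a z x₁ x₂, |c x₁ a z - c x₂ a z| ≤ Lc * dist x₁ x₂
  c_lipW : ∀ x a z₁ z₂, |c x a z₁ - c x a z₂| ≤ Lc * dist z₁ z₂
  F_lipX : ∀ a z x₁ x₂, dist (F x₁ a z) (F x₂ a z) ≤ LF * dist x₁ x₂
  F_lipW : ∀ x a z₁ z₂, dist (F x a z₁) (F x a z₂) ≤ LF * dist z₁ z₂

section

variable {X 𝔸 W : Type*} [MetricSpace X] [Nonempty 𝔸]
  [MetricSpace W] [MeasurableSpace W] [BorelSpace W]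
  {F : X → 𝔸 → W → X} {c : X → 𝔸 → W → ℝ} {α Mc Lc LF : ℝ}

lemma bellmanPhi_eq (μ : Measure W) : bellmanPhi F c α μ = robustPhi F c α {μ} := by
  funext v x
  exact iInf_congr fun a => (supInt_singleton μ _).symm

lemma BoundedLip.abs_integrand_sub_le (H : LipMDP F c α Mc Lc LF) {u : X → ℝ} {M L : ℝ}
    (hu : BoundedLip u M L) {x₁ x₂ : X} {a₁ a₂ : 𝔸} {z₁ z₂ : W} {D : ℝ}
    (hc : |c x₁ a₁ z₁ - c x₂ a₂ z₂| ≤ Lc * D)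
    (hF : dist (F x₁ a₁ z₁) (F x₂ a₂ z₂) ≤ LF * D) :
    |(c x₁ a₁ z₁ + α * u (F x₁ a₁ z₁)) - (c x₂ a₂ z₂ + α * u (F x₂ a₂ z₂))|
      ≤ (Lc + α * LF * L) * D := by
  have h1 : |u (F x₁ a₁ z₁) - u (F x₂ a₂ z₂)| ≤ L * (LF * D) :=
    (hu.lip _ _).trans (mul_le_mul_of_nonneg_left hF hu.L_nonneg)
  calc _ = |(c x₁ a₁ z₁ - c x₂ a₂ z₂) + α * (u (F x₁ a₁ z₁) - u (F x₂ a₂ z₂))| := by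
        congr 1; ring
    _ ≤ |c x₁ a₁ z₁ - c x₂ a₂ z₂| + α * |u (F x₁ a₁ z₁) - u (F x₂ a₂ z₂)| := by
        refine (abs_add_le _ _).trans ?_
        rw [abs_mul, abs_of_nonneg H.α_nonneg]
    _ ≤ Lc * D + α * (L * (LF * D)) :=
        add_le_add hc (mul_le_mul_of_nonneg_left h1 H.α_nonneg)
    _ = _ := by ring

lemma BoundedLip.integrand (H : LipMDP F c α Mc Lc LF) {u : X → ℝ} {M L : ℝ}
    (hu : BoundedLip u M L) (x : X) (a : 𝔸) :
    BoundedLip (fun z => c x a z + α * u (F x a z)) (Mc + α * M) (Lc + α * LF * L) where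
  M_nonneg := add_nonneg H.Mc_nonneg (mul_nonneg H.α_nonneg hu.M_nonneg)
  L_nonneg := add_nonneg H.Lc_nonneg (mul_nonneg (mul_nonneg H.α_nonneg H.LF_nonneg) hu.L_nonneg)
  bound z := by
    refine (abs_add_le _ _).trans (add_le_add (H.c_bound x a z) ?_)
    rw [abs_mul, abs_of_nonneg H.α_nonneg]
    exact mul_le_mul_of_nonneg_left (hu.bound _) H.α_nonneg
  lip z₁ z₂ := hu.abs_integrand_sub_le H (H.c_lipW x a z₁ z₂) (H.F_lipW x a z₁ z₂)

variable {P : Set (Measure W)}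

/-- One application of the robust Bellman operator preserves boundedness and Lipschitz continuity. -/
lemma BoundedLip.robustPhi (H : LipMDP F c α Mc Lc LF) (hne : P.Nonempty)
    (hP : ∀ ν ∈ P, IsProbabilityMeasure ν) {u : X → ℝ} {M L : ℝ} (hu : BoundedLip u M L) :
    BoundedLip (robustPhi F c α P u) (Mc + α * M) (Lc + α * LF * L) where
  M_nonneg := add_nonneg H.Mc_nonneg (mul_nonneg H.α_nonneg hu.M_nonneg)
  L_nonneg := add_nonneg H.Lc_nonneg (mul_nonneg (mul_nonneg H.α_nonneg H.LF_nonneg) hu.L_nonneg)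
  bound x := by
    have hb : ∀ a, |supInt P (fun z => c x a z + α * u (F x a z))| ≤ Mc + α * M :=
      fun a => (hu.integrand H x a).abs_supInt_le hne hP
    have h := abs_ciInf_sub_le (g := fun _ : 𝔸 => (0 : ℝ)) hb
      (fun a => by simpa using (abs_nonneg _).trans (hb a)) (by simpa using hb)
    rw [ciInf_const, sub_zero] at h
    exact h
  lip x₁ x₂ := abs_ciInf_sub_le
    (fun a => (hu.integrand H x₁ a).abs_supInt_le hne hP)
    (fun a => (hu.integrand H x₂ a).abs_supInt_le hne hP)
    (fun a => abs_supInt_sub_le (hu.integrand H x₁ a) (hu.integrand H x₂ a)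
      (fun z => hu.abs_integrand_sub_le H (H.c_lipX a z x₁ x₂) (H.F_lipX a z x₁ x₂)) hne hP)

lemma BoundedLip.robustPhi_iterate (H : LipMDP F c α Mc Lc LF) (hne : P.Nonempty)
    (hP : ∀ ν ∈ P, IsProbabilityMeasure ν) {v : X → ℝ} {Mv Lv : ℝ} (hv : BoundedLip v Mv Lv)
    (s : ℕ) : BoundedLip ((_root_.robustPhi F c α P)^[s] v) (supB α Mc Mv s)
      (lipB α Lc LF Lv s) := by
  induction s with
  | zero => exact hv
  | succ n ih => rw [Function.iterate_succ_apply']; exact ih.robustPhi H hne hP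

lemma BoundedLip.bellmanPhi_iterate (H : LipMDP F c α Mc Lc LF)
    (μ : Measure W) [hμ : IsProbabilityMeasure μ] {v : X → ℝ} {Mv Lv : ℝ}
    (hv : BoundedLip v Mv Lv) (s : ℕ) :
    BoundedLip ((bellmanPhi F c α μ)^[s] v) (supB α Mc Mv s) (lipB α Lc LF Lv s) := by
  rw [bellmanPhi_eq]
  exact hv.robustPhi_iterate H (Set.singleton_nonempty μ) (by rintro _ rfl; exact hμ) s

/-- The two Bellman iterates are infima of the two Q-operators, so an error bound for the latter
passes to the former. -/
lemma iterate_error_of_Q_error (H : LipMDP F c α Mc Lc LF) (hne : P.Nonempty)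
    (hP : ∀ ν ∈ P, IsProbabilityMeasure ν) (μ : Measure W) [IsProbabilityMeasure μ]
    {v : X → ℝ} {Mv Lv δ : ℝ} (hv : BoundedLip v Mv Lv) (n : ℕ) (x : X)
    (hQ : ∀ a, |Qop F c α μ (n + 1) v x a - robustQop F c α P (n + 1) v x a| ≤ δ) :
    |(bellmanPhi F c α μ)^[n + 1] v x - (robustPhi F c α P)^[n + 1] v x| ≤ δ := by
  rw [Function.iterate_succ_apply', Function.iterate_succ_apply']
  exact abs_ciInf_sub_le (C := Mc + α * supB α Mc Mv n)
    (fun a => abs_integral_le ((hv.bellmanPhi_iterate H μ n).integrand H x a).bound μ)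
    (fun a => ((hv.robustPhi_iterate H hne hP n).integrand H x a).abs_supInt_le hne hP) hQ

/-- The error recursion: with `K` bounding the change of measure, the error in step `n + 1` is at most
`K` times the bounded Lipschitz norm of the integrand plus `α` times the error in step `n`. -/
lemma Q_error_le_of_iterate_error (H : LipMDP F c α Mc Lc LF) (hne : P.Nonempty)
    (hP : ∀ ν ∈ P, IsProbabilityMeasure ν) (μ : Measure W) [IsProbabilityMeasure μ]
    {K : ℝ} (hK : ∀ (f : W → ℝ) (M L : ℝ), BoundedLip f M L →
      ∀ ν ∈ P, |∫ z, f z ∂μ - ∫ z, f z ∂ν| ≤ K * (M + L))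
    {v : X → ℝ} {Mv Lv : ℝ} (hv : BoundedLip v Mv Lv) (n : ℕ)
    (ih : ∀ y, |(bellmanPhi F c α μ)^[n] v y - (robustPhi F c α P)^[n] v y|
      ≤ K * errB α Lc LF Mc Mv Lv n) (x : X) (a : 𝔸) :
    |Qop F c α μ (n + 1) v x a - robustQop F c α P (n + 1) v x a|
      ≤ K * errB α Lc LF Mc Mv Lv (n + 1) := by
  have hw := (hv.bellmanPhi_iterate H μ n).integrand H x a
  have hw' := (hv.robustPhi_iterate H hne hP n).integrand H x a
  -- The intermediate term is the worst-case expectation of the integrand of the true iterate.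
  have h1 := hw.abs_integral_sub_supInt_le hne hP μ (hK _ _ _ hw)
  have h2 : |supInt P _ - supInt P _| ≤ α * (K * errB α Lc LF Mc Mv Lv n) :=
    abs_supInt_sub_le hw hw' (fun z => by
      rw [add_sub_add_left_eq_sub, ← mul_sub, abs_mul, abs_of_nonneg H.α_nonneg]
      exact mul_le_mul_of_nonneg_left (ih _) H.α_nonneg) hne hP
  refine (abs_sub_le _ _ _).trans ((add_le_add h1 h2).trans_eq ?_)
  simp only [errB, supB, lipB]
  ring

lemma Q_error_le (H : LipMDP F c α Mc Lc LF) (hne : P.Nonempty)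
    (hP : ∀ ν ∈ P, IsProbabilityMeasure ν) (μ : Measure W) [IsProbabilityMeasure μ]
    {K : ℝ} (hK : ∀ (f : W → ℝ) (M L : ℝ), BoundedLip f M L →
      ∀ ν ∈ P, |∫ z, f z ∂μ - ∫ z, f z ∂ν| ≤ K * (M + L))
    {v : X → ℝ} {Mv Lv : ℝ} (hv : BoundedLip v Mv Lv) (n : ℕ) (x : X) (a : 𝔸) :
    |Qop F c α μ (n + 1) v x a - robustQop F c α P (n + 1) v x a|
      ≤ K * errB α Lc LF Mc Mv Lv (n + 1) := by
  refine Q_error_le_of_iterate_error H hne hP μ hK hv n ?_ x a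
  clear x a
  induction n with
  | zero => intro y; simp [errB]
  | succ n ih =>
    exact fun y => iterate_error_of_Q_error H hne hP μ hv n y fun a =>
      Q_error_le_of_iterate_error H hne hP μ hK hv n ih y a

lemma supB_nonneg {Mv : ℝ} (H : LipMDP F c α Mc Lc LF) (hMv : 0 ≤ Mv) (s : ℕ) :
    0 ≤ supB α Mc Mv s := by
  induction s with
  | zero => exact hMv
  | succ n ih => exact add_nonneg H.Mc_nonneg (mul_nonneg H.α_nonneg ih)

lemma lipB_nonneg {Lv : ℝ} (H : LipMDP F c α Mc Lc LF) (hLv : 0 ≤ Lv) (s : ℕ) :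
    0 ≤ lipB α Lc LF Lv s := by
  induction s with
  | zero => exact hLv
  | succ n ih =>
    exact add_nonneg H.Lc_nonneg (mul_nonneg (mul_nonneg H.α_nonneg H.LF_nonneg) ih)

lemma errB_nonneg {Mv Lv : ℝ} (H : LipMDP F c α Mc Lc LF) (hMv : 0 ≤ Mv) (hLv : 0 ≤ Lv) (s : ℕ) :
    0 ≤ errB α Lc LF Mc Mv Lv s := by
  induction s with
  | zero => exact le_rfl
  | succ n ih =>
    exact add_nonneg (add_nonneg (supB_nonneg H hMv _) (lipB_nonneg H hLv _))
      (mul_nonneg H.α_nonneg ih)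

/-- A bound on the Q-error that holds for arbitrary ambiguity sets; it settles the case
`d(μ,μ̂) = ∞`, `Diff2 = 0`. -/
lemma Q_error_le_two_mul (H : LipMDP F c α Mc Lc LF) (hne : P.Nonempty)
    (hP : ∀ ν ∈ P, IsProbabilityMeasure ν) (μ : Measure W) [IsProbabilityMeasure μ]
    {v : X → ℝ} {Mv Lv : ℝ} (hv : BoundedLip v Mv Lv) (n : ℕ) (x : X) (a : 𝔸) :
    |Qop F c α μ (n + 1) v x a - robustQop F c α P (n + 1) v x a|
      ≤ 2 * errB α Lc LF Mc Mv Lv (n + 1) := by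
  refine Q_error_le H hne hP μ (fun f M L hf ν hν => ?_) hv n x a
  have := hP ν hν
  have h1 := abs_integral_le hf.bound μ
  have h2 := abs_integral_le hf.bound ν
  have h3 := abs_sub (∫ z, f z ∂μ) (∫ z, f z ∂ν)
  linarith [hf.L_nonneg]

end

/-- Lemma C.5: the (robust) Q-operators and Bellman iterates built from the ambiguity set
`P = {ν : d(ν,μ̂) ≤ ε}` differ from the true ones by at most `(ψ(d(μ,μ̂)) + ψ(ε))·Diff₂(t,v)`. -/
theorem stmt_6 {X 𝔸 W : Type*}
    [MetricSpace X] [TopologicalSpace.SeparableSpace X] [MeasurableSpace X] [BorelSpace X]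
    [MetricSpace 𝔸] [TopologicalSpace.SeparableSpace 𝔸] [MeasurableSpace 𝔸] [BorelSpace 𝔸]
    [CompactSpace 𝔸] [Nonempty 𝔸]
    [MetricSpace W] [TopologicalSpace.SeparableSpace W] [MeasurableSpace W] [BorelSpace W]
    (μ : Measure W) [IsProbabilityMeasure μ]
    (c : X → 𝔸 → W → ℝ)
    (hccont : Continuous (fun p : X × 𝔸 × W => c p.1 p.2.1 p.2.2))
    (Mc : ℝ) (hcbd : ∀ x a z, c x a z ≤ Mc) (hcnn : ∀ x a z, 0 ≤ c x a z)
    (F : X → 𝔸 → W → X)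
    (hFcont : Continuous (fun p : X × 𝔸 × W => F p.1 p.2.1 p.2.2))
    (α : ℝ) (hα0 : 0 < α) (hα1 : α < 1)
    (Lc LF : ℝ) (hLc : 0 ≤ Lc) (hLF : 0 ≤ LF) (hαLF : α * LF < 1)
    (hcLipX : ∀ a z x₁ x₂, |c x₁ a z - c x₂ a z| ≤ Lc * dist x₁ x₂)
    (hcLipW : ∀ x a z₁ z₂, |c x a z₁ - c x a z₂| ≤ Lc * dist z₁ z₂)
    (hFLipX : ∀ a z x₁ x₂, dist (F x₁ a z) (F x₂ a z) ≤ LF * dist x₁ x₂)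
    (hFLipW : ∀ x a z₁ z₂, dist (F x a z₁) (F x a z₂) ≤ LF * dist z₁ z₂)
    (d : Measure W → Measure W → ℝ≥0∞) (hd0 : ∀ ν : Measure W, d ν ν = 0)
    (ψ : ℝ → ℝ) (hψcont : ContinuousOn ψ (Set.Ici 0)) (hψmono : MonotoneOn ψ (Set.Ici 0))
    (hψ0 : ψ 0 = 0) (hψnonneg : ∀ s : ℝ, 0 ≤ s → 0 ≤ ψ s)
    (hβψ : ∀ ν₁ ν₂ : Measure W, IsProbabilityMeasure ν₁ → IsProbabilityMeasure ν₂ →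
      d ν₁ ν₂ ≠ ⊤ → betaDist ν₁ ν₂ ≤ ψ (d ν₁ ν₂).toReal)
    (μhat : Measure W) [IsProbabilityMeasure μhat] (ε : ℝ≥0)
    (P : Set (Measure W))
    (hP : P = {ν : Measure W | IsProbabilityMeasure ν ∧ d ν μhat ≤ (ε : ℝ≥0∞)})
    (v : X → ℝ) (Lv : ℝ) (hLv : 0 ≤ Lv)
    (Mv : ℝ) (hvbd : ∀ x, |v x| ≤ Mv)
    (hvLip : ∀ x₁ x₂, |v x₁ - v x₂| ≤ Lv * dist x₁ x₂)
    (t : ℕ) (ht : 1 ≤ t) :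
    (∀ (x : X) (a : 𝔸),
      ENNReal.ofReal |Qop F c α μ t v x a - robustQop F c α P t v x a| ≤
        (psiE ψ (d μ μhat) + ENNReal.ofReal (ψ ε)) *
          ENNReal.ofReal (Diff2 α Lc LF Mc Mv Lv t)) ∧
    (∀ x : X,
      ENNReal.ofReal |(bellmanPhi F c α μ)^[t] v x - (robustPhi F c α P)^[t] v x| ≤
        (psiE ψ (d μ μhat) + ENNReal.ofReal (ψ ε)) *
          ENNReal.ofReal (Diff2 α Lc LF Mc Mv Lv t)) := by
  rcases isEmpty_or_nonempty X with hX | ⟨⟨x₀⟩⟩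
  · exact ⟨fun x => hX.elim x, fun x => hX.elim x⟩
  obtain ⟨z₀⟩ : Nonempty W := nonempty_of_isProbabilityMeasure μ
  obtain ⟨a₀⟩ := ‹Nonempty 𝔸›
  have : Nonempty 𝔸 := ⟨a₀⟩
  have H : LipMDP F c α Mc Lc LF :=
    ⟨hα0.le, (hcnn x₀ a₀ z₀).trans (hcbd x₀ a₀ z₀), hLc, hLF,
      fun x a z => by rw [abs_of_nonneg (hcnn x a z)]; exact hcbd x a z,
      hcLipX, hcLipW, hFLipX, hFLipW⟩
  have hMv : 0 ≤ Mv := (abs_nonneg _).trans (hvbd x₀)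
  have hv : BoundedLip v Mv Lv := ⟨hMv, hLv, hvbd, hvLip⟩
  have hne : P.Nonempty := ⟨μhat, by rw [hP]; exact ⟨inferInstance, by simp [hd0]⟩⟩
  have hPp : ∀ ν ∈ P, IsProbabilityMeasure ν := fun ν hν => by rw [hP] at hν; exact hν.1
  obtain ⟨n, rfl⟩ : ∃ n, t = n + 1 := ⟨t - 1, by omega⟩
  rw [← errB_eq_Diff2]
  have hE := errB_nonneg H hMv hLv (n + 1)
  set E := errB α Lc LF Mc Mv Lv (n + 1) with hEdef
  by_cases hd : d μ μhat = ⊤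
  · have htop : psiE ψ (d μ μhat) = ⊤ := by simp [psiE, hd]
    rw [htop, top_add]
    rcases hE.eq_or_lt with h0 | hpos
    · have hQ : ∀ (x : X) (a : 𝔸),
          |Qop F c α μ (n + 1) v x a - robustQop F c α P (n + 1) v x a| ≤ 0 := fun x a =>
        (Q_error_le_two_mul H hne hPp μ hv n x a).trans_eq (by rw [← hEdef, ← h0, mul_zero])
      refine ⟨fun x a => ?_, fun x => ?_⟩
      · rw [ENNReal.ofReal_of_nonpos (hQ x a)]
        exact zero_le
      · rw [ENNReal.ofReal_of_nonpos (iterate_error_of_Q_error H hne hPp μ hv n x (hQ x))]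
        exact zero_le
    · rw [ENNReal.top_mul (ENNReal.ofReal_pos.2 hpos).ne']
      exact ⟨fun _ _ => le_top, fun _ => le_top⟩
  · have hψd := hψnonneg (d μ μhat).toReal ENNReal.toReal_nonneg
    have hψε := hψnonneg ε ε.2
    have hpsi : psiE ψ (d μ μhat) = ENNReal.ofReal (ψ (d μ μhat).toReal) := by simp [psiE, hd]
    rw [hpsi, ← ENNReal.ofReal_add hψd hψε, ← ENNReal.ofReal_mul (add_nonneg hψd hψε)]
    have hK : ∀ (f : W → ℝ) (M L : ℝ), BoundedLip f M L → ∀ ν ∈ P,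
        |∫ z, f z ∂μ - ∫ z, f z ∂ν| ≤ (ψ (d μ μhat).toReal + ψ ε) * (M + L) := by
      intro f M L hf ν hν
      have := hPp ν hν
      have hdν : d ν μhat ≤ (ε : ℝ≥0∞) := by rw [hP] at hν; exact hν.2
      have hdν' : d ν μhat ≠ ⊤ := ne_top_of_le_ne_top ENNReal.coe_ne_top hdν
      have hML := add_nonneg hf.M_nonneg hf.L_nonneg
      have hβμ := hβψ μ μhat inferInstance inferInstance hd
      have hβν : betaDist ν μhat ≤ ψ ε :=
        (hβψ ν μhat inferInstance inferInstance hdν').trans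
          (hψmono ENNReal.toReal_nonneg ε.2 (ENNReal.toReal_mono ENNReal.coe_ne_top hdν))
      have h1 := (hf.abs_integral_sub_le_betaDist μ μhat).trans
        (mul_le_mul_of_nonneg_left hβμ hML)
      have h2 := (hf.abs_integral_sub_le_betaDist ν μhat).trans
        (mul_le_mul_of_nonneg_left hβν hML)
      rw [abs_sub_comm] at h2
      have h3 := abs_sub_le (∫ z, f z ∂μ) (∫ z, f z ∂μhat) (∫ z, f z ∂ν)
      linarith
    have hQ := Q_error_le H hne hPp μ hK hv n
    exact ⟨fun x a => ENNReal.ofReal_le_ofReal (hQ x a), fun x => ENNReal.ofReal_le_ofReal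
      (iterate_error_of_Q_error H hne hPp μ hv n x (hQ x))⟩
end
end

section
/- Adopt the MDP data with Lipschitz assumptions, the robust Bellman operator, the comparison function ψ, and Δ. Let μ̂ be a Borel probability measure on W, ε ∈ [0,∞), and P = { ν : d(ν, μ̂) ≤ ε } (nonempty since d(μ̂, μ̂) = 0). Let J* : X → ℝ be bounded measurable with Φ J* = J*, and let J̃ : X → ℝ be bounded measurable with Φ̃^P J̃ = J̃. Then |J*(x) − J̃(x)| ≤ Δ · (ψ(d(μ, μ̂)) + ψ(ε)) for all x ∈ X; in particular, if d(μ, μ̂) ≤ ε then sup_{x ∈ X} |J̃(x) − J*(x)| ≤ 2 ψ(ε) Δ. (Deterministic core of Theorem 3.4.) -/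
/-!
Write `g x a z = c x a z + α * J* (F x a z)`. The fixed-point equation for `J*` shows that `J*` is
bounded by `Mc / (1 - α)` and `Lc / (1 - α * LF)`-Lipschitz, so `z ↦ g x a z` is bounded by
`Mc / (1 - α)` and `Lc / (1 - α * LF)`-Lipschitz as well. The sum `B` of these two constants is
`(1 - α) * Δ`, so `|∫ g dν - ∫ g dμ| ≤ B * β(ν, μ)`, which for `ν ∈ P` is at most
`B * (ψ(d(μ, μ̂)) + ψ(ε))` by the triangle inequality through `μ̂`
(`abs_integral_sub_le_betaDist`).

If `T` bounds `|∫ g dν - ∫ g dμ|` uniformly, then `|J* - J̃| ≤ s` everywhere implies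
`|J* - J̃| ≤ T + α * s` everywhere, since infima and suprema are nonexpansive; iterating gives
`|J* - J̃| ≤ T / (1 - α)`. All three a priori bounds (boundedness and the Lipschitz property of
`J*`, and the final estimate) are instances of the same iteration, `le_of_contraction_step`.
-/

open MeasureTheory Filter Topology
open scoped ENNReal NNReal Classical

noncomputable section

/-- A quantity that is bounded above, and whose every upper bound `s` improves to `T + α * s`, is at
most the fixed point `T / (1 - α)` of that map. -/
lemma le_of_contraction_step {ι : Type*} (u : ι → ℝ) (α T M : ℝ) (hα0 : 0 < α) (hα1 : α < 1)
    (hM : ∀ i, u i ≤ M)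
    (hstep : ∀ s : ℝ, (∀ i, u i ≤ s) → ∀ i, u i ≤ T + α * s) (i : ι) :
    u i ≤ T / (1 - α) := by
  have h1 : (1 - α) ≠ 0 := by linarith
  have key : ∀ n : ℕ, ∀ i, u i ≤ T / (1 - α) + α ^ n * (M - T / (1 - α)) := by
    intro n
    induction n with
    | zero => intro i; simpa using hM i
    | succ n ih =>
      intro i
      refine (hstep _ ih i).trans (le_of_eq ?_)
      field_simp
      ring
  have hlim : Tendsto (fun n : ℕ => T / (1 - α) + α ^ n * (M - T / (1 - α))) atTop
      (𝓝 (T / (1 - α) + 0 * (M - T / (1 - α)))) :=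
    ((tendsto_pow_atTop_nhds_zero_of_lt_one hα0.le hα1).mul_const _).const_add _
  rw [zero_mul, add_zero] at hlim
  exact ge_of_tendsto' hlim fun n => key n i

lemma abs_ciInf_sub_ciInf_le {ι : Type*} [Nonempty ι] (f g : ι → ℝ) (t : ℝ)
    (hf : BddBelow (Set.range f)) (hg : BddBelow (Set.range g))
    (h : ∀ i, |f i - g i| ≤ t) : |(⨅ i, f i) - ⨅ i, g i| ≤ t := by
  have h1 : (⨅ i, f i) - t ≤ ⨅ i, g i := le_ciInf fun i => by
    have := ciInf_le hf i
    have := abs_le.1 (h i)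
    linarith
  have h2 : (⨅ i, g i) - t ≤ ⨅ i, f i := le_ciInf fun i => by
    have := ciInf_le hg i
    have := abs_le.1 (h i)
    linarith
  rw [abs_le]
  constructor <;> linarith

lemma abs_sub_sSup_le {S : Set ℝ} (hS : S.Nonempty) (r t : ℝ) (h : ∀ y ∈ S, |r - y| ≤ t) :
    |r - sSup S| ≤ t := by
  have hub : ∀ y ∈ S, y ≤ r + t := fun y hy => by linarith [(abs_le.1 (h y hy)).1]
  obtain ⟨y, hy⟩ := hS
  have h1 : sSup S ≤ r + t := csSup_le ⟨y, hy⟩ hub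
  have h2 : y ≤ sSup S := le_csSup ⟨r + t, hub⟩ hy
  have h3 := (abs_le.1 (h y hy)).2
  rw [abs_le]
  constructor <;> linarith

lemma abs_integral_le_of_bound {W : Type*} [MeasurableSpace W] (ν : Measure W)
    [IsProbabilityMeasure ν] (f : W → ℝ) (C : ℝ) (h : ∀ z, |f z| ≤ C) : |∫ z, f z ∂ν| ≤ C := by
  simpa using norm_integral_le_of_norm_le_const (μ := ν) (f := f) (C := C) (ae_of_all _ h)

lemma integrable_of_bound {W : Type*} [MeasurableSpace W] (ν : Measure W)
    [IsProbabilityMeasure ν] (f : W → ℝ) (hf : Measurable f) (C : ℝ) (h : ∀ z, |f z| ≤ C) :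
    Integrable f ν :=
  Integrable.of_bound hf.aestronglyMeasurable C (ae_of_all _ h)

lemma abs_integral_sub_le_of_bound {W : Type*} [MeasurableSpace W] (ν : Measure W)
    [IsProbabilityMeasure ν] (f g : W → ℝ) (hf : Integrable f ν) (hg : Integrable g ν) (C : ℝ)
    (h : ∀ z, |f z - g z| ≤ C) : |∫ z, f z ∂ν - ∫ z, g z ∂ν| ≤ C := by
  rw [← integral_sub hf hg]
  exact abs_integral_le_of_bound ν _ C h

/-- A function with sup norm at most `C` and Lipschitz constant `L` is, after division by `L + C`,
a test function for the bounded Lipschitz metric. -/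
lemma abs_integral_sub_le_betaDist {W : Type*} [PseudoMetricSpace W] [MeasurableSpace W]
    (ν₁ ν₂ : Measure W) [IsProbabilityMeasure ν₁] [IsProbabilityMeasure ν₂]
    (f : W → ℝ) (hf : Measurable f) (L C : ℝ) (hL : 0 ≤ L) (hC : 0 ≤ C)
    (hfL : ∀ x y, |f x - f y| ≤ L * dist x y) (hfC : ∀ x, |f x| ≤ C) :
    |∫ z, f z ∂ν₁ - ∫ z, f z ∂ν₂| ≤ (L + C) * betaDist ν₁ ν₂ := by
  -- When `L + C = 0` one cannot divide, but then `C = 0` and `f` vanishes.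
  rcases (add_nonneg hL hC).eq_or_lt with h0 | hpos
  · have hf0 : f = 0 := by
      funext z
      have := hfC z
      have hC0 : C = 0 := by linarith
      rw [hC0] at this
      exact abs_nonpos_iff.1 this
    simp [hf0, ← h0]
  · have hbdd : BddAbove {r : ℝ | ∃ f : W → ℝ, Measurable f ∧ BLle1 f ∧
        r = |∫ z, f z ∂ν₁ - ∫ z, f z ∂ν₂|} := by
      refine ⟨2, ?_⟩
      rintro r ⟨g, -, ⟨L', C', hL', hC', hLC, -, hg⟩, rfl⟩
      have hg1 : ∀ z, |g z| ≤ 1 := fun z => (hg z).trans (by linarith)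
      have h1 := abs_integral_le_of_bound ν₁ g 1 hg1
      have h2 := abs_integral_le_of_bound ν₂ g 1 hg1
      exact (abs_sub _ _).trans (by linarith)
    have hmem : |∫ z, (L + C)⁻¹ * f z ∂ν₁ - ∫ z, (L + C)⁻¹ * f z ∂ν₂| ≤ betaDist ν₁ ν₂ := by
      refine le_csSup hbdd ⟨fun z => (L + C)⁻¹ * f z, hf.const_mul _, ?_, rfl⟩
      have hi : 0 ≤ (L + C)⁻¹ := (inv_pos.2 hpos).le
      refine ⟨(L + C)⁻¹ * L, (L + C)⁻¹ * C, by positivity, by positivity, ?_, ?_, ?_⟩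
      · rw [← mul_add, inv_mul_cancel₀ hpos.ne']
      · intro x y
        rw [← mul_sub, abs_mul, abs_of_nonneg hi, mul_assoc]
        exact mul_le_mul_of_nonneg_left (hfL x y) hi
      · intro x
        rw [abs_mul, abs_of_nonneg hi]
        exact mul_le_mul_of_nonneg_left (hfC x) hi
    rw [integral_const_mul, integral_const_mul, ← mul_sub, abs_mul,
      abs_of_pos (inv_pos.2 hpos)] at hmem
    rwa [inv_mul_le_iff₀ hpos] at hmem

/-- Deterministic core of Theorem 3.4: the fixed points of the Bellman operator and of the
robust Bellman operator built from `P = {ν : d(ν,μ̂) ≤ ε}` satisfy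
`|J*(x) − J̃(x)| ≤ Δ·(ψ(d(μ,μ̂)) + ψ(ε))`, where
`Δ = ‖c‖_∞/(1−α)² + L_c/(1−α) + αL_cL_F/((1−α)(1−αL_F))`; in particular, if `d(μ,μ̂) ≤ ε`
then `sup_x |J̃(x) − J*(x)| ≤ 2ψ(ε)Δ`. -/
theorem stmt_7 {X 𝔸 W : Type*}
    [MetricSpace X] [TopologicalSpace.SeparableSpace X] [MeasurableSpace X] [BorelSpace X]
    [MetricSpace 𝔸] [TopologicalSpace.SeparableSpace 𝔸] [MeasurableSpace 𝔸] [BorelSpace 𝔸]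
    [CompactSpace 𝔸] [Nonempty 𝔸]
    [MetricSpace W] [TopologicalSpace.SeparableSpace W] [MeasurableSpace W] [BorelSpace W]
    (μ : Measure W) [IsProbabilityMeasure μ]
    (c : X → 𝔸 → W → ℝ)
    (hccont : Continuous (fun p : X × 𝔸 × W => c p.1 p.2.1 p.2.2))
    (Mc : ℝ) (hcbd : ∀ x a z, c x a z ≤ Mc) (hcnn : ∀ x a z, 0 ≤ c x a z)
    (F : X → 𝔸 → W → X)
    (hFcont : Continuous (fun p : X × 𝔸 × W => F p.1 p.2.1 p.2.2))
    (α : ℝ) (hα0 : 0 < α) (hα1 : α < 1)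
    (Lc LF : ℝ) (hLc : 0 ≤ Lc) (hLF : 0 ≤ LF) (hαLF : α * LF < 1)
    (hcLipX : ∀ a z x₁ x₂, |c x₁ a z - c x₂ a z| ≤ Lc * dist x₁ x₂)
    (hcLipW : ∀ x a z₁ z₂, |c x a z₁ - c x a z₂| ≤ Lc * dist z₁ z₂)
    (hFLipX : ∀ a z x₁ x₂, dist (F x₁ a z) (F x₂ a z) ≤ LF * dist x₁ x₂)
    (hFLipW : ∀ x a z₁ z₂, dist (F x a z₁) (F x a z₂) ≤ LF * dist z₁ z₂)
    (d : Measure W → Measure W → ℝ≥0∞) (hd0 : ∀ ν : Measure W, d ν ν = 0)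
    (ψ : ℝ → ℝ) (hψcont : ContinuousOn ψ (Set.Ici 0)) (hψmono : MonotoneOn ψ (Set.Ici 0))
    (hψ0 : ψ 0 = 0) (hψnonneg : ∀ s : ℝ, 0 ≤ s → 0 ≤ ψ s)
    (hβψ : ∀ ν₁ ν₂ : Measure W, IsProbabilityMeasure ν₁ → IsProbabilityMeasure ν₂ →
      d ν₁ ν₂ ≠ ⊤ → betaDist ν₁ ν₂ ≤ ψ (d ν₁ ν₂).toReal)
    (μhat : Measure W) [IsProbabilityMeasure μhat] (ε : ℝ≥0)
    (P : Set (Measure W))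
    (hP : P = {ν : Measure W | IsProbabilityMeasure ν ∧ d ν μhat ≤ (ε : ℝ≥0∞)})
    (Jstar : X → ℝ) (hJmeas : Measurable Jstar) (hJbd : ∃ M, ∀ x, |Jstar x| ≤ M)
    (hJfix : ∀ x, bellmanPhi F c α μ Jstar x = Jstar x)
    (Jrob : X → ℝ) (hJrmeas : Measurable Jrob) (hJrbd : ∃ M, ∀ x, |Jrob x| ≤ M)
    (hJrfix : ∀ x, robustPhi F c α P Jrob x = Jrob x) :
    (∀ x : X, ENNReal.ofReal |Jstar x - Jrob x| ≤
      (psiE ψ (d μ μhat) + ENNReal.ofReal (ψ ε)) *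
        ENNReal.ofReal (Mc / (1 - α) ^ 2 + Lc / (1 - α) +
          α * Lc * LF / ((1 - α) * (1 - α * LF)))) ∧
    (d μ μhat ≤ (ε : ℝ≥0∞) → ∀ x : X,
      |Jrob x - Jstar x| ≤ 2 * ψ ε *
        (Mc / (1 - α) ^ 2 + Lc / (1 - α) + α * Lc * LF / ((1 - α) * (1 - α * LF)))) := by
  have hWne : Nonempty W := by
    by_contra h
    rw [not_nonempty_iff] at h
    exact (IsProbabilityMeasure.ne_zero μ) (Measure.eq_zero_of_isEmpty μ)
  have hα : 0 < 1 - α := by linarith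
  have hαF : 0 < 1 - α * LF := by linarith
  obtain ⟨M, hM⟩ := hJbd
  obtain ⟨M', hM'⟩ := hJrbd
  have hcabs : ∀ x a z, |c x a z| ≤ Mc := fun x a z => by
    rw [abs_of_nonneg (hcnn x a z)]
    exact hcbd x a z
  have hgmeas : ∀ v : X → ℝ, Measurable v → ∀ x a,
      Measurable fun z => c x a z + α * v (F x a z) := by
    intro v hv x a
    have hcm : Measurable fun z => c x a z :=
      (hccont.comp (f := fun z : W => (x, a, z)) (by fun_prop)).measurable
    have hFm : Measurable fun z => F x a z :=
      (hFcont.comp (f := fun z : W => (x, a, z)) (by fun_prop)).measurable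
    exact hcm.add ((hv.comp hFm).const_mul α)
  have hgbd : ∀ (v : X → ℝ) (s : ℝ), (∀ x, |v x| ≤ s) → ∀ x a z,
      |c x a z + α * v (F x a z)| ≤ Mc + α * s := by
    intro v s hv x a z
    refine (abs_add_le _ _).trans (add_le_add (hcabs x a z) ?_)
    rw [abs_mul, abs_of_pos hα0]
    exact mul_le_mul_of_nonneg_left (hv _) hα0.le
  have hgint : ∀ (v : X → ℝ) (s : ℝ), Measurable v → (∀ x, |v x| ≤ s) →
      ∀ (ν : Measure W) [IsProbabilityMeasure ν] x a,
      Integrable (fun z => c x a z + α * v (F x a z)) ν :=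
    fun v s hv hs ν _ x a => integrable_of_bound ν _ (hgmeas v hv x a) _ (hgbd v s hs x a)
  have hJbelow : ∀ x, BddBelow
      (Set.range fun a => ∫ z, (c x a z + α * Jstar (F x a z)) ∂μ) := by
    intro x
    refine ⟨-(Mc + α * M), ?_⟩
    rintro _ ⟨a, rfl⟩
    exact (abs_le.1 (abs_integral_le_of_bound μ _ _ (hgbd Jstar M hM x a))).1
  have hJle : ∀ x, |Jstar x| ≤ Mc / (1 - α) := by
    refine le_of_contraction_step (fun x => |Jstar x|) α Mc M hα0 hα1 hM ?_
    intro s hs x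
    rw [← hJfix x, bellmanPhi, abs_le]
    have hi := fun a => abs_le.1 (abs_integral_le_of_bound μ _ _ (hgbd Jstar s hs x a))
    obtain ⟨a⟩ := ‹Nonempty 𝔸›
    exact ⟨le_ciInf fun a => (hi a).1, (ciInf_le (hJbelow x) a).trans (hi a).2⟩
  set K := Lc / (1 - α * LF) with hK
  have hK0 : 0 ≤ K := div_nonneg hLc hαF.le
  -- `K` is the fixed point of the recursion for Lipschitz constants under the Bellman operator.
  have hKfix : Lc + α * (K * LF) = K := by
    rw [hK]; field_simp; ring
  have hJlip : ∀ x y, |Jstar x - Jstar y| ≤ K * dist x y := by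
    -- The iteration is applied to the excess `|J* x - J* y| - K * dist x y`, with `T = 0`.
    have h := le_of_contraction_step
      (fun p : X × X => |Jstar p.1 - Jstar p.2| - K * dist p.1 p.2) α 0 (M + M) hα0 hα1 ?_ ?_
    · intro x y
      have := h (x, y)
      simp only [zero_div] at this
      linarith
    · rintro ⟨x, y⟩
      have h1 := abs_sub (Jstar x) (Jstar y)
      have h2 := hM x
      have h3 := hM y
      have h4 : 0 ≤ K * dist x y := mul_nonneg hK0 dist_nonneg
      simp only
      linarith
    · rintro s hs ⟨x, y⟩
      have hmain : |Jstar x - Jstar y| ≤ K * dist x y + α * s := by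
        rw [← hJfix x, ← hJfix y]
        refine abs_ciInf_sub_ciInf_le _ _ _ (hJbelow x) (hJbelow y) fun a => ?_
        refine abs_integral_sub_le_of_bound μ _ _ (hgint Jstar M hJmeas hM μ x a)
          (hgint Jstar M hJmeas hM μ y a) _ fun z => ?_
        have h1 := hcLipX a z x y
        have h2 := hs (F x a z, F y a z)
        simp only at h2
        have h3 := mul_le_mul_of_nonneg_left (hFLipX a z x y) hK0
        have h4 : |Jstar (F x a z) - Jstar (F y a z)| ≤ K * (LF * dist x y) + s := by linarith
        have h5 := mul_le_mul_of_nonneg_left h4 hα0.le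
        calc |c x a z + α * Jstar (F x a z) - (c y a z + α * Jstar (F y a z))|
            = |(c x a z - c y a z) + α * (Jstar (F x a z) - Jstar (F y a z))| := by
              congr 1; ring
          _ ≤ |c x a z - c y a z| + α * |Jstar (F x a z) - Jstar (F y a z)| := by
              refine (abs_add_le _ _).trans_eq ?_
              rw [abs_mul, abs_of_pos hα0]
          _ ≤ Lc * dist x y + α * (K * (LF * dist x y) + s) := add_le_add h1 h5
          _ = (Lc + α * (K * LF)) * dist x y + α * s := by ring
          _ = K * dist x y + α * s := by rw [hKfix]
      simp only
      linarith
  have hgC : ∀ x a z, |c x a z + α * Jstar (F x a z)| ≤ Mc / (1 - α) := by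
    intro x a z
    refine (hgbd Jstar _ hJle x a z).trans_eq ?_
    field_simp
    ring
  have hgL : ∀ x a z w, |c x a z + α * Jstar (F x a z) - (c x a w + α * Jstar (F x a w))| ≤
      K * dist z w := by
    intro x a z w
    have h1 := hcLipW x a z w
    have h4 : |Jstar (F x a z) - Jstar (F x a w)| ≤ K * (LF * dist z w) :=
      (hJlip _ _).trans (mul_le_mul_of_nonneg_left (hFLipW x a z w) hK0)
    have h5 := mul_le_mul_of_nonneg_left h4 hα0.le
    calc |c x a z + α * Jstar (F x a z) - (c x a w + α * Jstar (F x a w))|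
        = |(c x a z - c x a w) + α * (Jstar (F x a z) - Jstar (F x a w))| := by
          congr 1; ring
      _ ≤ |c x a z - c x a w| + α * |Jstar (F x a z) - Jstar (F x a w)| := by
          refine (abs_add_le _ _).trans_eq ?_
          rw [abs_mul, abs_of_pos hα0]
      _ ≤ Lc * dist z w + α * (K * (LF * dist z w)) := add_le_add h1 h5
      _ = (Lc + α * (K * LF)) * dist z w := by ring
      _ = K * dist z w := by rw [hKfix]
  have hPprob : ∀ ν ∈ P, IsProbabilityMeasure ν := fun ν hν => by
    rw [hP] at hν; exact hν.1
  have hPne : P.Nonempty := ⟨μhat, by rw [hP]; exact ⟨inferInstance, by rw [hd0]; exact zero_le⟩⟩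
  have hcompare : ∀ T : ℝ, (∀ ν ∈ P, ∀ x a, |∫ z, (c x a z + α * Jstar (F x a z)) ∂μ -
      ∫ z, (c x a z + α * Jstar (F x a z)) ∂ν| ≤ T) →
      ∀ x, |Jstar x - Jrob x| ≤ T / (1 - α) := by
    intro T hT
    refine le_of_contraction_step (fun x => |Jstar x - Jrob x|) α T (M + M') hα0 hα1
      (fun x => (abs_sub _ _).trans (add_le_add (hM x) (hM' x))) ?_
    intro s hs x
    rw [← hJfix x, ← hJrfix x]
    have hSne : ∀ a, {r : ℝ | ∃ ν ∈ P,
        r = ∫ z, (c x a z + α * Jrob (F x a z)) ∂ν}.Nonempty := fun a => by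
      obtain ⟨ν, hν⟩ := hPne
      exact ⟨_, ν, hν, rfl⟩
    refine abs_ciInf_sub_ciInf_le _ _ _ (hJbelow x) ?_ fun a => ?_
    · refine ⟨0 - (Mc + α * M'), ?_⟩
      rintro _ ⟨a, rfl⟩
      have := abs_sub_sSup_le (hSne a) 0 (Mc + α * M') (by
        rintro _ ⟨ν, hν, rfl⟩
        have := hPprob ν hν
        rw [zero_sub, abs_neg]
        exact abs_integral_le_of_bound ν _ _ (hgbd Jrob M' hM' x a))
      have := (abs_le.1 this).2
      simp only
      linarith
    · refine abs_sub_sSup_le (hSne a) _ _ ?_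
      rintro _ ⟨ν, hν, rfl⟩
      have := hPprob ν hν
      refine (abs_sub_le _ (∫ z, (c x a z + α * Jstar (F x a z)) ∂ν) _).trans
        (add_le_add (hT ν hν x a) ?_)
      refine abs_integral_sub_le_of_bound ν _ _ (hgint Jstar M hJmeas hM ν x a)
        (hgint Jrob M' hJrmeas hM' ν x a) _ fun z => ?_
      rw [add_sub_add_left_eq_sub, ← mul_sub, abs_mul, abs_of_pos hα0]
      exact mul_le_mul_of_nonneg_left (hs _) hα0.le
  set Δ := Mc / (1 - α) ^ 2 + Lc / (1 - α) + α * Lc * LF / ((1 - α) * (1 - α * LF)) with hΔ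
  have hB : (K + Mc / (1 - α)) / (1 - α) = Δ := by
    rw [hΔ, hK]; field_simp; ring
  -- `0 ≤ Mc` uses a point of `X`, hence the argument `x`.
  have hMc : ∀ _ : X, 0 ≤ Mc := fun x => by
    obtain ⟨a⟩ := ‹Nonempty 𝔸›
    obtain ⟨z⟩ := hWne
    exact (hcnn x a z).trans (hcbd x a z)
  have hΔ0 : ∀ _ : X, 0 ≤ Δ := fun x => by
    have := hMc x
    rw [← hB]
    positivity
  have hreal : d μ μhat ≠ ⊤ → ∀ x : X,
      |Jstar x - Jrob x| ≤ (ψ (d μ μhat).toReal + ψ ε) * Δ := by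
    intro hfin x
    have hMc0 := hMc x
    have hC0 : 0 ≤ Mc / (1 - α) := by positivity
    have hB0 : 0 ≤ K + Mc / (1 - α) := by positivity
    have := hcompare ((K + Mc / (1 - α)) * (ψ (d μ μhat).toReal + ψ ε)) (by
      intro ν hν y a
      have hνp := hPprob ν hν
      rw [hP] at hν
      have hνε : d ν μhat ≤ (ε : ℝ≥0∞) := hν.2
      have hνfin : d ν μhat ≠ ⊤ := ne_top_of_le_ne_top ENNReal.coe_ne_top hνε
      have hψν : ψ (d ν μhat).toReal ≤ ψ ε :=
        hψmono ENNReal.toReal_nonneg ε.2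
          (by simpa using ENNReal.toReal_mono ENNReal.coe_ne_top hνε)
      have h1 := (abs_integral_sub_le_betaDist μ μhat _ (hgmeas Jstar hJmeas y a) K _ hK0 hC0
        (hgL y a) (hgC y a)).trans
        (mul_le_mul_of_nonneg_left (hβψ μ μhat inferInstance inferInstance hfin) hB0)
      have h2 := (abs_integral_sub_le_betaDist ν μhat _ (hgmeas Jstar hJmeas y a) K _ hK0 hC0
        (hgL y a) (hgC y a)).trans
        (mul_le_mul_of_nonneg_left ((hβψ ν μhat hνp inferInstance hνfin).trans hψν) hB0)
      rw [abs_sub_comm] at h2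
      rw [mul_add]
      exact (abs_sub_le _ _ _).trans (add_le_add h1 h2)) x
    refine this.trans_eq ?_
    rw [← hB]
    ring
  refine ⟨fun x => ?_, fun hle x => ?_⟩
  · by_cases hfin : d μ μhat = ⊤
    · rw [psiE, if_pos hfin, top_add]
      -- When `Δ = 0` the right-hand side is `⊤ * 0 = 0`, but all the integrands vanish, so `J* = J̃`.
      rcases (hΔ0 x).eq_or_lt with h0 | hpos
      · have hMc0 := hMc x
        have hC0 : 0 ≤ Mc / (1 - α) := by positivity
        have hBz : K + Mc / (1 - α) = 0 := by
          rw [← h0, div_eq_zero_iff] at hB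
          exact hB.resolve_right hα.ne'
        have hCz : Mc / (1 - α) = 0 := by linarith
        have hg0 : ∀ y a z, c y a z + α * Jstar (F y a z) = 0 := fun y a z =>
          abs_nonpos_iff.1 ((hgC y a z).trans hCz.le)
        have := hcompare 0 (by intro ν _ y a; simp [hg0]) x
        rw [zero_div] at this
        rw [ENNReal.ofReal_of_nonpos this]
        exact zero_le
      · rw [ENNReal.top_mul (ENNReal.ofReal_pos.2 hpos).ne']
        exact le_top
    · rw [psiE, if_neg hfin, ← ENNReal.ofReal_add (hψnonneg _ ENNReal.toReal_nonneg)
        (hψnonneg ε ε.2), ← ENNReal.ofReal_mul (add_nonneg (hψnonneg _ ENNReal.toReal_nonneg)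
        (hψnonneg ε ε.2))]
      exact ENNReal.ofReal_le_ofReal (hreal hfin x)
  · have hfin : d μ μhat ≠ ⊤ := ne_top_of_le_ne_top ENNReal.coe_ne_top hle
    have hψμ : ψ (d μ μhat).toReal ≤ ψ ε :=
      hψmono ENNReal.toReal_nonneg ε.2
        (by simpa using ENNReal.toReal_mono ENNReal.coe_ne_top hle)
    rw [abs_sub_comm]
    refine (hreal hfin x).trans (mul_le_mul_of_nonneg_right ?_ (hΔ0 x))
    linarith
end
end
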